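/- For any bounded continuous pseudometric d on a Tychonoff space X, the Kantorovich functional d̂ on the space of Radon probability measures is a pseudometric (symmetric, satisfies the triangle inequality, zero on the diagonal), and if d is a metric then d̂ is a metric; moreover diam(X, d) = diam of the space of Radon probability measures with respect to d̂. -/

import Mathlib

open MeasureTheory
open scoped ENNReal

/-- A measure is tight (Radon) if the complement of some compact set has arbitrarily
small measure. -/
def IsTightM {α : Type*} [TopologicalSpace α] {m : MeasurableSpace α} (μ : Measure α) : Prop :=
  ∀ ε : ℝ≥0∞, 0 < ε → ∃ K : Set α, IsCompact K ∧ μ Kᶜ ≤ ε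

/-- `l` is a coupling of `μ` and `η` if its marginals are `μ` and `η`. -/
def IsCoupling {α : Type*} {m : MeasurableSpace α} (l : Measure (α × α)) (μ η : Measure α) :
    Prop :=
  l.map Prod.fst = μ ∧ l.map Prod.snd = η

/-- A tight (Radon) probability measure. -/
def IsRadonProb {α : Type*} [TopologicalSpace α] {m : MeasurableSpace α}
    (μ : Measure α) : Prop :=
  IsProbabilityMeasure μ ∧ IsTightM μ

/-- The Kantorovich functional associated to a cost function `d`. -/
noncomputable def kantD {α : Type*} [TopologicalSpace α] {m : MeasurableSpace α}
    (d : α → α → ℝ) (μ η : Measure α) : ℝ :=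
  sInf {r | ∃ l : Measure (α × α), IsProbabilityMeasure l ∧ IsTightM l ∧
    IsCoupling l μ η ∧ r = ∫ p, d p.1 p.2 ∂l}

namespace K12

set_option linter.unusedSectionVars false

variable {X Y : Type*} [TopologicalSpace X] [T2Space X] [MeasurableSpace X] [BorelSpace X]
  [PseudoMetricSpace Y] [MeasurableSpace Y] [BorelSpace Y]

lemma aesm {μ : Measure X} (hμ : IsTightM μ) {f : X → Y} (hf : Continuous f) :
    AEStronglyMeasurable f μ := by
  rw [aestronglyMeasurable_iff_aemeasurable_separable]
  refine ⟨hf.measurable.aemeasurable, ?_⟩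
  have : ∀ n : ℕ, ∃ K : Set X, IsCompact K ∧ μ Kᶜ ≤ ((n : ℝ≥0∞) + 1)⁻¹ := fun n =>
    hμ _ (by simp)
  choose K hK hKm using this
  refine ⟨⋃ n, f '' K n, ?_, ?_⟩
  · exact TopologicalSpace.IsSeparable.iUnion fun n => ((hK n).image hf).isSeparable
  · rw [ae_iff]
    refine le_antisymm ?_ zero_le
    have h0 : Filter.Tendsto (fun n : ℕ => ((n : ℝ≥0∞) + 1)⁻¹) Filter.atTop (nhds 0) := by
      have := (Filter.tendsto_add_atTop_iff_nat 1).2 ENNReal.tendsto_inv_nat_nhds_zero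
      simpa using this
    refine ge_of_tendsto' h0 fun n => le_trans (measure_mono ?_) (hKm n)
    intro x hx hxK
    exact hx (Set.mem_iUnion.2 ⟨n, Set.mem_image_of_mem f hxK⟩)

lemma tight_of_coupling {l : Measure (X × X)} {μ η : Measure X} (h : IsCoupling l μ η)
    (hμ : IsTightM μ) (hη : IsTightM η) : IsTightM l := by
  intro ε hε
  obtain ⟨K1, hK1, h1⟩ := hμ (ε / 2) (ENNReal.half_pos hε.ne')
  obtain ⟨K2, hK2, h2⟩ := hη (ε / 2) (ENNReal.half_pos hε.ne')
  refine ⟨K1 ×ˢ K2, hK1.prod hK2, ?_⟩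
  rw [← h.1, Measure.map_apply measurable_fst hK1.measurableSet.compl] at h1
  rw [← h.2, Measure.map_apply measurable_snd hK2.measurableSet.compl] at h2
  calc l (K1 ×ˢ K2)ᶜ ≤ l (Prod.fst ⁻¹' K1ᶜ ∪ Prod.snd ⁻¹' K2ᶜ) := by
        apply measure_mono
        intro p hp
        by_contra hc
        simp only [Set.mem_union, Set.mem_preimage, Set.mem_compl_iff, not_or, not_not] at hc
        exact hp ⟨hc.1, hc.2⟩
    _ ≤ ε / 2 + ε / 2 := (measure_union_le _ _).trans (add_le_add h1 h2)
    _ = ε := ENNReal.add_halves ε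

lemma prob_of_coupling {l : Measure (X × X)} {μ η : Measure X} (h : IsCoupling l μ η)
    (hμ : IsProbabilityMeasure μ) : IsProbabilityMeasure l := by
  constructor
  have := hμ.measure_univ
  rwa [← h.1, Measure.map_apply measurable_fst MeasurableSet.univ] at this

lemma coupling_aesm {l : Measure (X × X)} {μ η : Measure X} (h : IsCoupling l μ η)
    (hμ : IsTightM μ) (hη : IsTightM η) {f : X → Y} (hf : Continuous f) :
    AEStronglyMeasurable (fun p : X × X => dist (f p.1) (f p.2)) l := by
  have h1 : AEStronglyMeasurable (fun p : X × X => f p.1) l := by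
    have := aesm hμ hf
    rw [← h.1] at this
    exact this.comp_measurable measurable_fst
  have h2 : AEStronglyMeasurable (fun p : X × X => f p.2) l := by
    have := aesm hη hf
    rw [← h.2] at this
    exact this.comp_measurable measurable_snd
  exact h1.dist h2

lemma integral_cost {l : Measure (X × X)} {μ η : Measure X} (h : IsCoupling l μ η)
    (hμ : IsRadonProb μ) (hη : IsRadonProb η) {f : X → Y} (hf : Continuous f)
    {C : ℝ} (hC : ∀ x y, dist (f x) (f y) ≤ C) :
    Integrable (fun p : X × X => dist (f p.1) (f p.2)) l ∧
    ENNReal.ofReal (∫ p, dist (f p.1) (f p.2) ∂l) = ∫⁻ p, edist (f p.1) (f p.2) ∂l := by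
  have := prob_of_coupling h hμ.1
  have hi : Integrable (fun p : X × X => dist (f p.1) (f p.2)) l := by
    refine Integrable.of_bound (coupling_aesm h hμ.2 hη.2 hf) C (ae_of_all _ fun p => ?_)
    rw [Real.norm_of_nonneg dist_nonneg]; exact hC _ _
  refine ⟨hi, ?_⟩
  rw [ofReal_integral_eq_lintegral_ofReal hi (ae_of_all _ fun p => dist_nonneg)]
  simp_rw [edist_dist]

/-- Approximate gluing of couplings along a countable partition. -/
lemma glue {ι : Type*} [Countable ι] {μ η ν : Measure X} [IsProbabilityMeasure μ]
    [IsProbabilityMeasure η] [IsProbabilityMeasure ν] {l1 l2 : Measure (X × X)}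
    (h1 : IsCoupling l1 μ η) (h2 : IsCoupling l2 η ν) {f : X → Y} (hf : Continuous f)
    (π : X → ι) (hπ : ∀ i, MeasurableSet (π ⁻¹' {i})) (a : ι → Y)
    (hm : Measurable fun y => edist (f y) (a (π y))) :
    ∃ l : Measure (X × X), IsCoupling l μ ν ∧ ∫⁻ p, edist (f p.1) (f p.2) ∂l ≤
      ∫⁻ p, edist (f p.1) (f p.2) ∂l1 + ∫⁻ p, edist (f p.1) (f p.2) ∂l2
        + 2 * ∫⁻ y, edist (f y) (a (π y)) ∂η := by
  have p1 := prob_of_coupling h1 ‹_›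
  have p2 := prob_of_coupling h2 ‹_›
  have part : ∀ (l : Measure (X × X)) (g : X × X → X), Measurable g →
      Measure.sum (fun i => l.restrict (g ⁻¹' (π ⁻¹' {i}))) = l := by
    intro l g hg
    rw [← Measure.restrict_iUnion]
    · have : ⋃ i, g ⁻¹' (π ⁻¹' {i}) = Set.univ := by
        ext x; simp
      rw [this, Measure.restrict_univ]
    · intro i j hij
      rw [Function.onFun, Set.disjoint_left]
      intro x hx hx'
      exact hij (by simpa using hx.symm.trans hx')
    · exact fun i => hg (hπ i)
  set m : ι → Measure X := fun i => (l1.restrict (Prod.snd ⁻¹' (π ⁻¹' {i}))).map Prod.fst with hmdef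
  set n : ι → Measure X := fun i => (l2.restrict (Prod.fst ⁻¹' (π ⁻¹' {i}))).map Prod.snd with hndef
  have mu : ∀ i, m i Set.univ = η (π ⁻¹' {i}) := fun i => by
    rw [hmdef]; simp only
    rw [Measure.map_apply measurable_fst MeasurableSet.univ, Set.preimage_univ,
      Measure.restrict_apply_univ, ← h1.2, Measure.map_apply measurable_snd (hπ i)]
  have nu : ∀ i, n i Set.univ = η (π ⁻¹' {i}) := fun i => by
    rw [hndef]; simp only
    rw [Measure.map_apply measurable_snd MeasurableSet.univ, Set.preimage_univ,
      Measure.restrict_apply_univ, ← h2.1, Measure.map_apply measurable_fst (hπ i)]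
  have fm : ∀ i, IsFiniteMeasure (m i) := fun i => ⟨by rw [mu]; exact measure_lt_top _ _⟩
  have fn : ∀ i, IsFiniteMeasure (n i) := fun i => ⟨by rw [nu]; exact measure_lt_top _ _⟩
  have sm : Measure.sum m = μ := by
    rw [hmdef, ← Measure.map_sum measurable_fst.aemeasurable, part l1 _ measurable_snd, h1.1]
  have sn : Measure.sum n = ν := by
    rw [hndef, ← Measure.map_sum measurable_snd.aemeasurable, part l2 _ measurable_fst, h2.2]
  have cm : ∀ i, (η (π ⁻¹' {i}))⁻¹ • (n i Set.univ • m i) = m i := fun i => by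
    rw [nu]
    by_cases h0 : η (π ⁻¹' {i}) = 0
    · have : m i = 0 := by rw [← Measure.measure_univ_eq_zero, mu, h0]
      simp [this]
    · rw [smul_smul, ENNReal.inv_mul_cancel h0 (measure_ne_top _ _), one_smul]
  have cn : ∀ i, (η (π ⁻¹' {i}))⁻¹ • (m i Set.univ • n i) = n i := fun i => by
    rw [mu]
    by_cases h0 : η (π ⁻¹' {i}) = 0
    · have : n i = 0 := by rw [← Measure.measure_univ_eq_zero, nu, h0]
      simp [this]
    · rw [smul_smul, ENNReal.inv_mul_cancel h0 (measure_ne_top _ _), one_smul]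
  set q : ι → Measure (X × X) := fun i => (η (π ⁻¹' {i}))⁻¹ • ((m i).prod (n i)) with hq
  have q1 : ∀ i, (q i).map Prod.fst = m i := fun i => by
    rw [hq]; simp only
    rw [Measure.map_smul, Measure.map_fst_prod, cm]
  have q2 : ∀ i, (q i).map Prod.snd = n i := fun i => by
    rw [hq]; simp only
    rw [Measure.map_smul, Measure.map_snd_prod, cn]
  refine ⟨Measure.sum q, ⟨?_, ?_⟩, ?_⟩
  · rw [Measure.map_sum measurable_fst.aemeasurable]; simp_rw [q1]; exact sm
  · rw [Measure.map_sum measurable_snd.aemeasurable]; simp_rw [q2]; exact sn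
  have me : ∀ i, Measurable fun x => edist (f x) (a i) := fun i =>
    (hf.edist continuous_const).measurable
  have key : ∀ i, ∫⁻ p, edist (f p.1) (f p.2) ∂(q i) ≤
      ∫⁻ x, edist (f x) (a i) ∂(m i) + ∫⁻ x, edist (f x) (a i) ∂(n i) := fun i => by
    calc ∫⁻ p, edist (f p.1) (f p.2) ∂(q i)
        ≤ ∫⁻ p, (edist (f p.1) (a i) + edist (f p.2) (a i)) ∂(q i) :=
          lintegral_mono fun p => edist_triangle_right _ _ _
      _ = ∫⁻ p, edist (f p.1) (a i) ∂(q i) + ∫⁻ p, edist (f p.2) (a i) ∂(q i) :=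
          lintegral_add_left ((me i).comp measurable_fst) _
      _ = _ := by
          have e1 := lintegral_map (μ := q i) (me i) measurable_fst
          have e2 := lintegral_map (μ := q i) (me i) measurable_snd
          rw [q1 i] at e1
          rw [q2 i] at e2
          rw [e1, e2]
  have bm : ∑' i, ∫⁻ x, edist (f x) (a i) ∂(m i) ≤
      ∫⁻ p, edist (f p.1) (f p.2) ∂l1 + ∫⁻ y, edist (f y) (a (π y)) ∂η := by
    calc ∑' i, ∫⁻ x, edist (f x) (a i) ∂(m i)
        = ∑' i, ∫⁻ p in Prod.snd ⁻¹' (π ⁻¹' {i}), edist (f p.1) (a (π p.2)) ∂l1 := by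
          congr 1; ext i
          rw [hmdef]; simp only
          rw [lintegral_map (me i) measurable_fst]
          refine setLIntegral_congr_fun (measurable_snd (hπ i)) ?_
          intro p hp
          have : π p.2 = i := hp
          simp only [this]
      _ = ∫⁻ p, edist (f p.1) (a (π p.2)) ∂l1 := by
          rw [← lintegral_sum_measure, part l1 _ measurable_snd]
      _ ≤ ∫⁻ p, (edist (f p.1) (f p.2) + edist (f p.2) (a (π p.2))) ∂l1 :=
          lintegral_mono fun p => edist_triangle _ _ _
      _ = _ := by
          have e1 := lintegral_map (μ := l1) hm measurable_snd
          rw [h1.2] at e1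
          rw [e1]
          exact lintegral_add_right _ (hm.comp measurable_snd)
  have bn : ∑' i, ∫⁻ x, edist (f x) (a i) ∂(n i) ≤
      ∫⁻ p, edist (f p.1) (f p.2) ∂l2 + ∫⁻ y, edist (f y) (a (π y)) ∂η := by
    calc ∑' i, ∫⁻ x, edist (f x) (a i) ∂(n i)
        = ∑' i, ∫⁻ p in Prod.fst ⁻¹' (π ⁻¹' {i}), edist (f p.2) (a (π p.1)) ∂l2 := by
          congr 1; ext i
          rw [hndef]; simp only
          rw [lintegral_map (me i) measurable_snd]
          refine setLIntegral_congr_fun (measurable_fst (hπ i)) ?_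
          intro p hp
          have : π p.1 = i := hp
          simp only [this]
      _ = ∫⁻ p, edist (f p.2) (a (π p.1)) ∂l2 := by
          rw [← lintegral_sum_measure, part l2 _ measurable_fst]
      _ ≤ ∫⁻ p, (edist (f p.1) (f p.2) + edist (f p.1) (a (π p.1))) ∂l2 :=
          lintegral_mono fun p => (edist_triangle_left _ _ (f p.1))
      _ = _ := by
          have e1 := lintegral_map (μ := l2) hm measurable_fst
          rw [h2.1] at e1
          rw [e1]
          exact lintegral_add_right _ (hm.comp measurable_fst)
  rw [lintegral_sum_measure]
  calc _ ≤ ∑' i, (∫⁻ x, edist (f x) (a i) ∂(m i) + ∫⁻ x, edist (f x) (a i) ∂(n i)) :=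
        ENNReal.tsum_le_tsum key
    _ = _ := ENNReal.tsum_add
    _ ≤ _ := add_le_add bm bn
    _ = _ := by ring

/-- Finite-valued approximation. -/
lemma approx {η : Measure X} (hη : IsRadonProb η) {f : X → Y} (hf : Continuous f)
    {C : ℝ} (hC : ∀ x y, dist (f x) (f y) ≤ C) (hs : Function.Surjective f)
    {ε : ℝ≥0∞} (hε : 0 < ε) :
    ∃ φ : SimpleFunc X Y, (Measurable fun y => edist (f y) (φ y)) ∧
      ∫⁻ y, edist (f y) (φ y) ∂η < ε := by
  have := hη.1
  obtain ⟨g, hg, hfg⟩ := aesm hη.2 hf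
  have hme : ∀ φ : SimpleFunc X Y, Measurable fun y => edist (f y) (φ y) := fun φ =>
    φ.measurable_bind (fun b y => edist (f y) b)
      (fun b => (hf.edist continuous_const).measurable)
  have ht : Filter.Tendsto (fun n => ∫⁻ y, edist (f y) (hg.approx n y) ∂η) Filter.atTop
      (nhds (∫⁻ y, 0 ∂η)) := by
    refine tendsto_lintegral_of_dominated_convergence (fun _ => ENNReal.ofReal C)
      (fun n => hme _) (fun n => ae_of_all _ fun y => ?_) ?_ ?_
    · obtain ⟨z, hz⟩ := hs (hg.approx n y)
      simp only [← hz, edist_dist]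
      exact ENNReal.ofReal_le_ofReal (hC _ _)
    · simp
    · filter_upwards [hfg] with y hy
      have := (tendsto_const_nhds (x := f y)).edist (hg.tendsto_approx y)
      rw [hy, edist_self] at this
      simpa only [hy] using this
  rw [lintegral_zero] at ht
  obtain ⟨n, hn⟩ := (ht.eventually (gt_mem_nhds hε)).exists
  exact ⟨_, hme _, hn⟩

lemma glue' {μ η ν : Measure X} (hμ : IsRadonProb μ)
    (hη : IsRadonProb η) (hν : IsRadonProb ν) {l1 l2 : Measure (X × X)}
    (h1 : IsCoupling l1 μ η) (h2 : IsCoupling l2 η ν) {f : X → Y} (hf : Continuous f)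
    {C : ℝ} (hC : ∀ x y, dist (f x) (f y) ≤ C) (hs : Function.Surjective f)
    {ε : ℝ} (hε : 0 < ε) :
    ∃ l : Measure (X × X), IsCoupling l μ ν ∧ ∫ p, dist (f p.1) (f p.2) ∂l ≤
      ∫ p, dist (f p.1) (f p.2) ∂l1 + ∫ p, dist (f p.1) (f p.2) ∂l2 + 2 * ε := by
  obtain ⟨φ, hm, hφ⟩ := approx hη hf hC hs (ENNReal.ofReal_pos.2 hε)
  have := hμ.1
  have := hη.1
  have := hν.1
  obtain ⟨l, hl, hle⟩ := glue (ι := φ.range) h1 h2 hf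
    (fun x => ⟨φ x, φ.mem_range_self x⟩) (fun i => by
      have : (fun x => (⟨φ x, φ.mem_range_self x⟩ : φ.range)) ⁻¹' {i} = φ ⁻¹' {i.1} := by
        ext x; simp [Subtype.ext_iff]
      rw [this]; exact φ.measurableSet_fiber _) (fun i => i.1) hm
  refine ⟨l, hl, ?_⟩
  rw [← (integral_cost hl hμ hν hf hC).2, ← (integral_cost h1 hμ hη hf hC).2,
    ← (integral_cost h2 hη hν hf hC).2] at hle
  have e1 : 0 ≤ ∫ p, dist (f p.1) (f p.2) ∂l1 := integral_nonneg fun p => dist_nonneg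
  have e2 : 0 ≤ ∫ p, dist (f p.1) (f p.2) ∂l2 := integral_nonneg fun p => dist_nonneg
  have := hle.trans (add_le_add_right (mul_le_mul_right hφ.le 2) _)
  rw [show (2 : ℝ≥0∞) = ENNReal.ofReal 2 by simp, ← ENNReal.ofReal_mul (by norm_num),
    ← ENNReal.ofReal_add e1 e2, ← ENNReal.ofReal_add (by positivity) (by positivity)] at this
  exact (ENNReal.ofReal_le_ofReal_iff (by positivity)).1 this

lemma compact_le {μ η : Measure X} (hμ : IsRadonProb μ)
    (hη : IsRadonProb η) {f : X → Y} (hf : Continuous f)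
    {C : ℝ} (hC : ∀ x y, dist (f x) (f y) ≤ C) (hinj : ∀ x y, dist (f x) (f y) = 0 → x = y)
    (hs : Function.Surjective f)
    (h : ∀ ε : ℝ, 0 < ε → ∃ l, IsCoupling l μ η ∧ ∫ p, dist (f p.1) (f p.2) ∂l < ε)
    {K : Set X} (hK : IsCompact K) : μ K ≤ η K := by
  have := hη.1
  have : T0Space Y := ⟨fun a b hab => by
    obtain ⟨x, rfl⟩ := hs a
    obtain ⟨y, rfl⟩ := hs b
    rw [hinj x y (Metric.inseparable_iff.1 hab)]⟩
  have hfin : Function.Injective f := fun x y hxy => hinj x y (by rw [hxy, dist_self])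
  have hKc : IsClosed (f '' K) := (hK.image hf).isClosed
  have hfm := hf.measurable
  have key : ∀ r > 0, μ K ≤ η.map f (Metric.cthickening r (f '' K)) := by
    intro r hr
    refine ENNReal.le_of_forall_pos_le_add fun ε hε _ => ?_
    obtain ⟨l, hl, hlt⟩ := h (ε * r) (by positivity)
    obtain ⟨hi, hc⟩ := integral_cost hl hμ hη hf hC
    have hch := mul_meas_ge_le_lintegral₀ (μ := l) (f := fun p => edist (f p.1) (f p.2))
      (by simp_rw [edist_dist]; exact hi.1.aemeasurable.ennreal_ofReal) (ENNReal.ofReal r)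
    have hb : l {p | ENNReal.ofReal r ≤ edist (f p.1) (f p.2)} ≤ ε := by
      rw [← hc] at hch
      have := hch.trans (ENNReal.ofReal_le_ofReal hlt.le)
      rw [mul_comm (ε : ℝ), ENNReal.ofReal_mul hr.le] at this
      rw [ENNReal.mul_le_mul_iff_right (by simpa using hr) ENNReal.ofReal_ne_top] at this
      simpa using this
    rw [Measure.map_apply hfm Metric.isClosed_cthickening.measurableSet]
    have e1 := Measure.map_apply (μ := l) measurable_fst hK.measurableSet
    have e2 := Measure.map_apply (μ := l) measurable_snd
      (hfm (Metric.isClosed_cthickening (δ := r) (E := f '' K)).measurableSet)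
    rw [hl.1] at e1
    rw [hl.2] at e2
    rw [e1, e2]
    refine le_trans ((measure_mono ?_).trans (measure_union_le _ _)) (add_le_add_right hb _)
    intro p hp
    by_cases hd : ENNReal.ofReal r ≤ edist (f p.1) (f p.2)
    · exact Or.inr hd
    · left
      refine Metric.mem_cthickening_of_edist_le _ (f p.1) _ _ (Set.mem_image_of_mem f hp) ?_
      rw [edist_comm]; exact (not_le.1 hd).le
  have ht := tendsto_measure_cthickening_of_isClosed (μ := η.map f) (s := f '' K)
    ⟨1, one_pos, by
      have := Measure.isProbabilityMeasure_map (μ := η) hfm.aemeasurable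
      exact measure_ne_top _ _⟩ hKc
  have ht' := ht.mono_left (nhdsWithin_le_nhds (s := Set.Ioi 0))
  have hle := ge_of_tendsto ht' (by
    filter_upwards [self_mem_nhdsWithin] with r hr using key r hr)
  rwa [Measure.map_apply hfm hKc.measurableSet, hfin.preimage_image] at hle

lemma measure_le {μ η : Measure X} (hμ : IsRadonProb μ)
    (h : ∀ K, IsCompact K → μ K ≤ η K) {B : Set X} (hB : IsClosed B) : μ B ≤ η B := by
  refine ENNReal.le_of_forall_pos_le_add fun ε hε _ => ?_
  obtain ⟨K, hK, hKε⟩ := hμ.2 ε (by simpa using hε)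
  calc μ B ≤ μ (B ∩ K ∪ Kᶜ) := measure_mono fun x hx => by
        by_cases hxK : x ∈ K
        · exact Or.inl ⟨hx, hxK⟩
        · exact Or.inr hxK
    _ ≤ μ (B ∩ K) + μ Kᶜ := measure_union_le _ _
    _ ≤ η B + ε := add_le_add ((h _ (hK.inter_left hB)).trans
        (measure_mono Set.inter_subset_left)) hKε

lemma measure_eq {μ η : Measure X} (hμ : IsRadonProb μ) (hη : IsRadonProb η)
    (h : ∀ K, IsCompact K → μ K ≤ η K) (h' : ∀ K, IsCompact K → η K ≤ μ K) : μ = η := by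
  have := hμ.1
  have := hη.1
  refine ext_of_generate_finite _ (borel_eq_generateFrom_isClosed (α := X) ▸ BorelSpace.measurable_eq)
    isPiSystem_isClosed (fun B hB => ?_) (by simp)
  exact le_antisymm (measure_le hμ h hB) (measure_le hη h' hB)

lemma swap_coupling {l : Measure (X × X)} {μ η : Measure X} (h : IsCoupling l μ η) :
    IsCoupling (l.map Prod.swap) η μ := by
  constructor
  · rw [Measure.map_map measurable_fst measurable_swap]; exact h.2
  · rw [Measure.map_map measurable_snd measurable_swap]; exact h.1

lemma swap_cost {l : Measure (X × X)} (d : X → X → ℝ) (hd : ∀ x y, d x y = d y x) :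
    ∫ p, d p.1 p.2 ∂(l.map Prod.swap) = ∫ p, d p.1 p.2 ∂l := by
  have : MeasurableEmbedding (Prod.swap : X × X → X × X) :=
    MeasurableEquiv.prodComm.measurableEmbedding
  rw [this.integral_map]
  exact integral_congr_ae (ae_of_all _ fun p => hd _ _)

lemma prod_coupling {μ η : Measure X} (hμ : IsRadonProb μ) (hη : IsRadonProb η) :
    IsCoupling (μ.prod η) μ η := by
  have := hμ.1
  have := hη.1
  constructor
  · rw [Measure.map_fst_prod]; simp
  · rw [Measure.map_snd_prod]; simp

lemma kant_le {d : X → X → ℝ} (hd : ∀ x y, 0 ≤ d x y) {l : Measure (X × X)} {μ η : Measure X}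
    (hμ : IsRadonProb μ) (hη : IsRadonProb η) (h : IsCoupling l μ η) :
    kantD d μ η ≤ ∫ p, d p.1 p.2 ∂l := by
  refine csInf_le ⟨0, ?_⟩ ⟨l, prob_of_coupling h hμ.1, tight_of_coupling h hμ.2 hη.2, h, rfl⟩
  rintro _ ⟨l, _, _, _, rfl⟩
  exact integral_nonneg fun p => hd _ _

lemma le_kant {d : X → X → ℝ} {μ η : Measure X}
    (hμ : IsRadonProb μ) (hη : IsRadonProb η) {b : ℝ}
    (h : ∀ l, IsCoupling l μ η → b ≤ ∫ p, d p.1 p.2 ∂l) : b ≤ kantD d μ η := by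
  have hc := prod_coupling hμ hη
  refine le_csInf ⟨_, _, prob_of_coupling hc hμ.1, tight_of_coupling hc hμ.2 hη.2, hc, rfl⟩ ?_
  rintro _ ⟨l, _, _, hl, rfl⟩
  exact h l hl

lemma exists_lt {d : X → X → ℝ} {μ η : Measure X}
    (hμ : IsRadonProb μ) (hη : IsRadonProb η) {b : ℝ} (hb : kantD d μ η < b) :
    ∃ l, IsCoupling l μ η ∧ ∫ p, d p.1 p.2 ∂l < b := by
  by_contra! hc
  exact absurd (le_kant hμ hη hc) (not_le.2 hb)

lemma dirac_radon (x : X) : IsRadonProb (Measure.dirac x) := by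
  refine ⟨inferInstance, fun ε hε => ⟨{x}, isCompact_singleton, ?_⟩⟩
  rw [Measure.dirac_apply' _ (measurableSet_singleton x).compl]
  simp

lemma dirac_cost {d : X → X → ℝ} {x y : X} {l : Measure (X × X)}
    (h : IsCoupling l (Measure.dirac x) (Measure.dirac y)) :
    ∫ p, d p.1 p.2 ∂l = d x y := by
  have := prob_of_coupling h inferInstance
  have h1 : ∀ᵐ p ∂l, p.1 = x := by
    have : ∀ᵐ z ∂(l.map Prod.fst), z = x := by rw [h.1]; simp [ae_dirac_eq]
    exact ae_of_ae_map measurable_fst.aemeasurable this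
  have h2 : ∀ᵐ p ∂l, p.2 = y := by
    have : ∀ᵐ z ∂(l.map Prod.snd), z = y := by rw [h.2]; simp [ae_dirac_eq]
    exact ae_of_ae_map measurable_snd.aemeasurable this
  have : ∫ p, d p.1 p.2 ∂l = ∫ p, d x y ∂l := integral_congr_ae (by
    filter_upwards [h1, h2] with p hp1 hp2
    rw [hp1, hp2])
  rw [this]; simp

theorem main (f : X → Y) (hf : Continuous f) (hs : Function.Surjective f)
    (d : X → X → ℝ) (hdf : ∀ x y, d x y = dist (f x) (f y))
    (hdbdd : ∃ C : ℝ, ∀ x y, d x y ≤ C) :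
    (∀ μ η : Measure X, IsRadonProb μ → IsRadonProb η → kantD d μ η = kantD d η μ) ∧
    (∀ μ : Measure X, IsRadonProb μ → kantD d μ μ = 0) ∧
    (∀ μ η ν : Measure X, IsRadonProb μ → IsRadonProb η → IsRadonProb ν →
      kantD d μ ν ≤ kantD d μ η + kantD d η ν) ∧
    ((∀ x y, d x y = 0 → x = y) →
      ∀ μ η : Measure X, IsRadonProb μ → IsRadonProb η → kantD d μ η = 0 → μ = η) ∧
    sSup {r | ∃ x y : X, r = d x y} =
      sSup {r | ∃ μ η : Measure X, IsRadonProb μ ∧ IsRadonProb η ∧ r = kantD d μ η} := by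
  obtain rfl : d = fun x y => dist (f x) (f y) := by ext x y; exact hdf x y
  obtain ⟨C, hC⟩ := hdbdd
  have hpos : ∀ x y : X, 0 ≤ dist (f x) (f y) := fun _ _ => dist_nonneg
  have hsy : ∀ x y : X, dist (f x) (f y) = dist (f y) (f x) := fun _ _ => dist_comm _ _
  have symm_le : ∀ μ η : Measure X, IsRadonProb μ → IsRadonProb η →
      kantD (fun x y => dist (f x) (f y)) μ η ≤ kantD (fun x y => dist (f x) (f y)) η μ := by
    intro μ η hμ hη
    refine le_kant hη hμ fun l hl => ?_
    rw [← swap_cost _ hsy]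
    exact kant_le hpos hμ hη (swap_coupling hl)
  have symm : ∀ μ η : Measure X, IsRadonProb μ → IsRadonProb η →
      kantD (fun x y => dist (f x) (f y)) μ η = kantD (fun x y => dist (f x) (f y)) η μ :=
    fun μ η hμ hη => le_antisymm (symm_le μ η hμ hη) (symm_le η μ hη hμ)
  refine ⟨symm, ?_, ?_, ?_, ?_⟩
  · intro μ hμ
    refine le_antisymm ?_ (le_kant hμ hμ fun l _ => integral_nonneg fun p => hpos _ _)
    have hmd : Measurable fun x : X => (x, x) := measurable_id.prodMk measurable_id
    have hc : IsCoupling (μ.map fun x : X => (x, x)) μ μ := by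
      constructor
      · rw [Measure.map_map measurable_fst hmd]; exact Measure.map_id
      · rw [Measure.map_map measurable_snd hmd]; exact Measure.map_id
    refine (kant_le hpos hμ hμ hc).trans_eq ?_
    rw [integral_map hmd.aemeasurable (coupling_aesm hc hμ.2 hμ.2 hf)]
    simp
  · intro μ η ν hμ hη hν
    refine le_of_forall_pos_le_add fun ε hε => ?_
    obtain ⟨l1, hl1, hc1⟩ := exists_lt (d := fun x y => dist (f x) (f y)) hμ hη (lt_add_of_pos_right _ (by positivity : 0 < ε / 4))
    obtain ⟨l2, hl2, hc2⟩ := exists_lt (d := fun x y => dist (f x) (f y)) hη hν (lt_add_of_pos_right _ (by positivity : 0 < ε / 4))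
    obtain ⟨l, hl, hle⟩ := glue' hμ hη hν hl1 hl2 hf hC hs (by positivity : 0 < ε / 4)
    have := kant_le hpos hμ hν hl
    linarith
  · intro hinj μ η hμ hη h0
    refine measure_eq hμ hη (fun K hK => ?_) (fun K hK => ?_)
    · exact compact_le hμ hη hf hC hinj hs (fun ε hε => exists_lt hμ hη (h0.trans_lt hε)) hK
    · rw [symm μ η hμ hη] at h0
      exact compact_le hη hμ hf hC hinj hs (fun ε hε => exists_lt hη hμ (h0.trans_lt hε)) hK
  · have hdir : ∀ x y : X, dist (f x) (f y) =
        kantD (fun x y => dist (f x) (f y)) (Measure.dirac x) (Measure.dirac y) := by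
      intro x y
      refine le_antisymm (le_kant (dirac_radon x) (dirac_radon y) fun l hl => ?_) ?_
      · exact (dirac_cost (d := fun x y => dist (f x) (f y)) hl).ge
      · have hc := prod_coupling (dirac_radon x) (dirac_radon y)
        exact (kant_le hpos (dirac_radon x) (dirac_radon y) hc).trans_eq (dirac_cost (d := fun x y => dist (f x) (f y)) hc)
    have hbd : BddAbove {r | ∃ x y : X, r = dist (f x) (f y)} :=
      ⟨C, by rintro _ ⟨x, y, rfl⟩; exact hC x y⟩
    have hub : ∀ μ η : Measure X, IsRadonProb μ → IsRadonProb η →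
        kantD (fun x y => dist (f x) (f y)) μ η ≤ sSup {r | ∃ x y : X, r = dist (f x) (f y)} := by
      intro μ η hμ hη
      have hc := prod_coupling hμ hη
      have := prob_of_coupling hc hμ.1
      refine (kant_le hpos hμ hη hc).trans ?_
      refine (integral_mono (integral_cost hc hμ hη hf hC).1 (integrable_const
        (sSup {r | ∃ x y : X, r = dist (f x) (f y)}))
        (fun p => le_csSup hbd ⟨p.1, p.2, rfl⟩)).trans_eq ?_
      simp
    rcases isEmpty_or_nonempty X with hX | ⟨⟨x0⟩⟩
    · congr 1
      ext r
      constructor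
      · rintro ⟨x, _⟩; exact hX.elim x
      · rintro ⟨μ, η, hμ, _⟩
        have := hμ.1
        exact (IsProbabilityMeasure.ne_zero μ (Measure.eq_zero_of_isEmpty μ)).elim
    · refine le_antisymm (csSup_le ⟨_, x0, x0, rfl⟩ ?_) (csSup_le
        ⟨_, _, _, dirac_radon x0, dirac_radon x0, rfl⟩ ?_)
      · rintro _ ⟨x, y, rfl⟩
        refine le_csSup ⟨sSup {r | ∃ x y : X, r = dist (f x) (f y)}, ?_⟩
          ⟨_, _, dirac_radon x, dirac_radon y, hdir x y⟩
        · rintro _ ⟨μ, η, hμ, hη, rfl⟩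
          exact hub μ η hμ hη
      · rintro _ ⟨μ, η, hμ, hη, rfl⟩
        exact hub μ η hμ hη

/-- Type synonym carrying the pseudometric `d`. -/
def Syn {X : Type*} (_ : X → X → ℝ) : Type _ := X

end K12

/-- For a bounded continuous pseudometric `d` on a Tychonoff space `X`, the Kantorovich
functional `d̂` is a pseudometric on the Radon probability measures; if `d` is a metric then
`d̂` is a metric; and `diam (X,d) = diam (HP(X), d̂)`. -/
theorem stmt12 {X : Type*} [TopologicalSpace X] [T2Space X] [CompletelyRegularSpace X]
    [MeasurableSpace X] [BorelSpace X]
    (d : X → X → ℝ) (hdcont : Continuous fun p : X × X => d p.1 p.2)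
    (hdsymm : ∀ x y, d x y = d y x) (hdself : ∀ x, d x x = 0)
    (hdtri : ∀ x y z, d x z ≤ d x y + d y z)
    (hdbdd : ∃ C : ℝ, ∀ x y, d x y ≤ C) :
    (∀ μ η : Measure X, IsRadonProb μ → IsRadonProb η → kantD d μ η = kantD d η μ) ∧
    (∀ μ : Measure X, IsRadonProb μ → kantD d μ μ = 0) ∧
    (∀ μ η ν : Measure X, IsRadonProb μ → IsRadonProb η → IsRadonProb ν →
      kantD d μ ν ≤ kantD d μ η + kantD d η ν) ∧
    ((∀ x y, d x y = 0 → x = y) →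
      ∀ μ η : Measure X, IsRadonProb μ → IsRadonProb η → kantD d μ η = 0 → μ = η) ∧
    sSup {r | ∃ x y : X, r = d x y} =
      sSup {r | ∃ μ η : Measure X, IsRadonProb μ ∧ IsRadonProb η ∧ r = kantD d μ η} := by
  letI P : PseudoMetricSpace (K12.Syn d) :=
    { dist := d
      dist_self := hdself
      dist_comm := hdsymm
      dist_triangle := hdtri }
  letI : MeasurableSpace (K12.Syn d) := borel _
  haveI : BorelSpace (K12.Syn d) := ⟨rfl⟩
  let f : X → K12.Syn d := fun x => x
  have hf : Continuous f := by
    rw [continuous_iff_continuousAt]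
    intro x
    rw [ContinuousAt, tendsto_iff_dist_tendsto_zero]
    have h : Continuous fun y => d y x := hdcont.comp (by fun_prop : Continuous fun y => (y, x))
    have h2 := h.tendsto x
    rw [hdself] at h2
    exact h2
  exact K12.main f hf (fun y => ⟨y, rfl⟩) d (fun _ _ => rfl) hdbdd
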